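/- Let a0 ∈ ℝ^k with ‖a0‖₂ = 1 and 0 < λ < 1. Let ā ∈ ℝ^k with ‖ā‖₂ = 1, set v = S_λ((Č_{a0})* ι ā), and suppose I = supp(v) = {i₁ < … < i_{|I|}} is nonempty with sign vector σ = sign(v). For i ∈ I set η_i = ‖ι* s_{−i}[ι a0]‖₂, and let U be the k×|I| matrix whose j-th column is σ_{i_j} ι* s_{−i_j}[ι a0] / η_{i_j}. Define M_σ = −ι* Č_{a0} P_I (Č_{a0})* ι (a k×k matrix), b_σ = λ ι* Č_{a0} P_I σ ∈ ℝ^k, and γ = −(āᵀ M_σ ā + b_σᵀ ā), where P_I is the m×m diagonal 0/1 projection onto coordinates in I. Assume: (a) ā is a constrained stationary point, i.e. M_σ ā + b_σ = (āᵀ M_σ ā + b_σᵀ ā) ā; and (b) UᵀU = Id + Δ with ‖Δ‖_{ℓ²→ℓ∞} ≤ λ²/√6 and ‖Δ‖_op ≤ λ/6. Then γ > 0 and for every nonzero ξ ∈ range(M_σ), ξᵀ (M_σ + γ Id) ξ < 0; in particular, for every nonzero ξ ∈ range(M_σ) with ⟨ξ, ā⟩ = 0, ξᵀ P_{ā⊥}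 (M_σ + γ Id) P_{ā⊥} ξ < 0, where P_{ā⊥} = Id − ā āᵀ. -/

import Mathlib

open scoped BigOperators Matrix

attribute [local instance 10] Classical.propDecidable

noncomputable section

/-- The index `t mod m` as an element of `Fin m`. -/
def idx (m : ℕ) [NeZero m] (t : ℤ) : Fin m :=
  ⟨(t % (m : ℤ)).toNat, by
    have hm : 0 < m := Nat.pos_of_ne_zero (NeZero.ne m)
    have hm' : (0 : ℤ) < (m : ℤ) := by exact_mod_cast hm
    have h1 : 0 ≤ t % (m : ℤ) := Int.emod_nonneg t (ne_of_gt hm')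
    have h2 : t % (m : ℤ) < (m : ℤ) := Int.emod_lt_of_pos t hm'
    omega⟩

/-- Cyclic shift: `(cshift τ v) i = v ((i - τ) mod m)`. -/
def cshift {m : ℕ} [NeZero m] (τ : ℤ) (v : Fin m → ℝ) : Fin m → ℝ :=
  fun i => v (idx m ((i : ℤ) - τ))

/-- Zero padding `ι : ℝ^k → ℝ^m`. -/
def pad (k m : ℕ) (a : Fin k → ℝ) : Fin m → ℝ :=
  fun i => if h : (i : ℕ) < k then a ⟨i, h⟩ else 0

/-- Restriction to the first `k` coordinates, `ι* : ℝ^m → ℝ^k`. -/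
def unpad {k m : ℕ} (h : k ≤ m) (v : Fin m → ℝ) : Fin k → ℝ :=
  fun j => v (Fin.castLE h j)

/-- Circulant matrix `C_w` whose `j`-th column is `s_j[w]`. -/
def circ {m : ℕ} [NeZero m] (w : Fin m → ℝ) : Matrix (Fin m) (Fin m) ℝ :=
  Matrix.of fun i j => cshift (j : ℤ) w i

/-- Reversed circulant matrix `Č_{a0}` whose `j`-th column is `s_{-j}[ι a0]`. -/
def rcirc (k m : ℕ) [NeZero m] (a0 : Fin k → ℝ) : Matrix (Fin m) (Fin m) ℝ :=
  Matrix.of fun i j => cshift (-(j : ℤ)) (pad k m a0) i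

/-- Circular convolution `w ⊛ x = C_w x`. -/
def conv {m : ℕ} [NeZero m] (w x : Fin m → ℝ) : Fin m → ℝ := (circ w).mulVec x

def dotp {α : Type*} [Fintype α] (u v : α → ℝ) : ℝ := ∑ i, u i * v i

def l2sq {α : Type*} [Fintype α] (v : α → ℝ) : ℝ := ∑ i, v i ^ 2

def l2norm {α : Type*} [Fintype α] (v : α → ℝ) : ℝ := Real.sqrt (l2sq v)

def l1norm {α : Type*} [Fintype α] (v : α → ℝ) : ℝ := ∑ i, |v i|

/-- Scalar soft-thresholding. -/
def soft (lam t : ℝ) : ℝ := Real.sign t * max (|t| - lam) 0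

/-- Entrywise soft-thresholding `S_λ`. -/
def softvec {m : ℕ} (lam : ℝ) (u : Fin m → ℝ) : Fin m → ℝ := fun i => soft lam (u i)

/-- The shift truncation `ι* s_{-τ}[ι a0] ∈ ℝ^k`. -/
def shiftTrunc {k m : ℕ} [NeZero m] (h : k ≤ m) (a0 : Fin k → ℝ) (τ : Fin m) : Fin k → ℝ :=
  unpad h (cshift (-(τ : ℤ)) (pad k m a0))

/-- The inner objective of the simplified marginal problem. -/
def phiHatInner (k m : ℕ) [NeZero m] (lam : ℝ) (a0 a : Fin k → ℝ) (x : Fin m → ℝ) : ℝ :=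
  l2sq (pad k m a0) / 2 + l2sq x / 2 - dotp (conv (pad k m a) x) (pad k m a0) + lam * l1norm x

/-- The simplified marginal objective `φ̂`. -/
def phiHat (k m : ℕ) [NeZero m] (lam : ℝ) (a0 a : Fin k → ℝ) : ℝ :=
  sInf (Set.range (phiHatInner k m lam a0 a))

/-- Zero-padding `ι` as an `m × k` matrix. -/
def padM (k m : ℕ) : Matrix (Fin m) (Fin k) ℝ :=
  Matrix.of fun i j => if (i : ℕ) = (j : ℕ) then 1 else 0

/-- The diagonal 0/1 projection matrix `P_I`. -/
def projM {m : ℕ} (I : Set (Fin m)) : Matrix (Fin m) (Fin m) ℝ :=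
  Matrix.of fun i j => if i = j ∧ i ∈ I then 1 else 0

/-- The `ℓ² → ℓ²` operator norm of a matrix. -/
def opNorm {α β : Type*} [Fintype α] [Fintype β] (A : Matrix α β ℝ) : ℝ :=
  sSup {c | ∃ v : β → ℝ, l2norm v = 1 ∧ c = l2norm (A.mulVec v)}

/-- The `ℓ² → ℓ∞` operator norm of a matrix. -/
def l2linfNorm {α β : Type*} [Fintype α] [Fintype β] (A : Matrix α β ℝ) : ℝ :=
  sSup {c | ∃ v : β → ℝ, l2norm v = 1 ∧ c = sSup {d | ∃ i, d = |A.mulVec v i|}}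

/-- The smallest eigenvalue of a symmetric matrix, via the Rayleigh quotient. -/
def lamMin {n : ℕ} (A : Matrix (Fin n) (Fin n) ℝ) : ℝ :=
  sInf {c | ∃ v : Fin n → ℝ, l2sq v = 1 ∧ c = dotp v (A.mulVec v)}

/-- `‖v‖_p^p = ∑ |v i|^p` for a real exponent `p`. -/
def lpPow {α : Type*} [Fintype α] (p : ℝ) (v : α → ℝ) : ℝ := ∑ i, |v i| ^ p

/-- The `ℓ^p` norm with real exponent `p`. -/
def lpNorm {α : Type*} [Fintype α] (p : ℝ) (v : α → ℝ) : ℝ := (lpPow p v) ^ (1 / p)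

/-- The continuous linear functional `v ↦ ⟨g, v⟩` on `ℝ^n`. -/
def dotCLM {n : ℕ} (g : Fin n → ℝ) : (Fin n → ℝ) →L[ℝ] ℝ :=
  LinearMap.toContinuousLinearMap
    { toFun := fun v => dotp g v
      map_add' := fun x y => by
        simp [dotp, mul_add, Finset.sum_add_distrib]
      map_smul' := fun c x => by
        simp only [dotp, Pi.smul_apply, smul_eq_mul, RingHom.id_apply, Finset.mul_sum]
        exact Finset.sum_congr rfl fun i _ => by ring }

/-!
Let `W` be the matrix of active truncated shifts `w_j`, multiplied by their signs, so that
`M_σ = -W Wᵀ` and stationarity reads `W (Wᵀ ā - λ) = γ ā`, with `λ < ⟨w_j, ā⟩` for every `j` by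
the definition of soft-thresholding. Pairing with `ā` gives `γ > 0`.

In the normalized atoms `U` the same equation is `U c = γ ā` with
`c_j = ‖w_j‖ (⟨w_j, ā⟩ - λ)`. Applying `Uᵀ` gives `γ ⟨u_j, ā⟩ = c_j + (Δ c)_j`, and
the `ℓ² → ℓ∞` bound on `Δ` turns this into `γ < ‖w_j‖² (1 - λ/6)` for each `j`. On the other
hand, near-orthogonality gives `(1 - λ/6) ‖ξ‖² ≤ ‖Uᵀ ξ‖²` on `range W`, whence
`γ (1 - λ/6) ‖ξ‖² ≤ ∑_j γ ⟨u_j, ξ⟩² < (1 - λ/6) ∑_j ‖w_j‖² ⟨u_j, ξ⟩² = (1 - λ/6) ‖Wᵀ ξ‖²`.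
-/

open Matrix

section Euclidean

variable {α β : Type*} [Fintype α] [Fintype β]

lemma l2norm_eq_norm_toLp (v : α → ℝ) : l2norm v = ‖WithLp.toLp 2 v‖ := by
  simp [l2norm, l2sq, EuclideanSpace.norm_eq]

lemma l2norm_nonneg (v : α → ℝ) : 0 ≤ l2norm v :=
  Real.sqrt_nonneg _

lemma l2norm_smul (c : ℝ) (v : α → ℝ) : l2norm (c • v) = |c| * l2norm v := by
  simp only [l2norm_eq_norm_toLp, WithLp.toLp_smul, norm_smul, Real.norm_eq_abs]

lemma l2norm_eq_zero {v : α → ℝ} : l2norm v = 0 ↔ v = 0 := by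
  rw [l2norm_eq_norm_toLp, norm_eq_zero, WithLp.toLp_eq_zero]

lemma l2norm_pos {v : α → ℝ} (hv : v ≠ 0) : 0 < l2norm v :=
  (l2norm_nonneg v).lt_of_ne' (mt l2norm_eq_zero.1 hv)

lemma abs_apply_le_l2norm (v : α → ℝ) (i : α) : |v i| ≤ l2norm v := by
  rw [l2norm_eq_norm_toLp]
  exact PiLp.norm_apply_le (WithLp.toLp 2 v) i

lemma l2sq_nonneg (v : α → ℝ) : 0 ≤ l2sq v :=
  Finset.sum_nonneg fun i _ => sq_nonneg (v i)

lemma l2norm_sq (v : α → ℝ) : l2norm v ^ 2 = l2sq v :=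
  Real.sq_sqrt (l2sq_nonneg v)

lemma l2sq_zero : l2sq (0 : α → ℝ) = 0 := by
  simp [l2sq]

lemma l2sq_pos {v : α → ℝ} (hv : v ≠ 0) : 0 < l2sq v :=
  l2norm_sq v ▸ pow_pos (l2norm_pos hv) 2

lemma l2sq_smul (c : ℝ) (v : α → ℝ) : l2sq (c • v) = c ^ 2 * l2sq v := by
  rw [← l2norm_sq, l2norm_smul, mul_pow, sq_abs, l2norm_sq]

lemma dotProduct_self_eq_l2sq (v : α → ℝ) : v ⬝ᵥ v = l2sq v := by
  simp only [dotProduct, l2sq, sq]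

lemma dotProduct_sq_le (u v : α → ℝ) : (u ⬝ᵥ v) ^ 2 ≤ l2sq u * l2sq v :=
  Finset.sum_mul_sq_le_sq_mul_sq _ _ _

lemma abs_dotProduct_le (u v : α → ℝ) : |u ⬝ᵥ v| ≤ l2norm u * l2norm v := by
  refine abs_le_of_sq_le_sq ?_ (mul_nonneg (l2norm_nonneg u) (l2norm_nonneg v))
  rw [mul_pow, l2norm_sq, l2norm_sq]
  exact dotProduct_sq_le u v

lemma l2norm_normalize_le_one (v : α → ℝ) : l2norm ((l2norm v)⁻¹ • v) ≤ 1 := by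
  rw [l2norm_smul, abs_of_nonneg (inv_nonneg.2 (l2norm_nonneg v))]
  exact inv_mul_le_one

lemma le_mul_l2norm_of_forall_unit {f : (α → ℝ) → ℝ} {C : ℝ}
    (hf : ∀ (c : ℝ) v, f (c • v) = |c| * f v) (hC : ∀ v, l2norm v = 1 → f v ≤ C) (v : α → ℝ) :
    f v ≤ C * l2norm v := by
  rcases eq_or_ne v 0 with rfl | hv
  · have hf0 := hf 0 0
    rw [abs_zero, zero_mul, smul_zero] at hf0
    rw [hf0, l2norm_eq_zero.2 rfl, mul_zero]
  · have hpos := l2norm_pos hv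
    have hunit := hC ((l2norm v)⁻¹ • v)
      (by rw [l2norm_smul, abs_of_pos (inv_pos.2 hpos), inv_mul_cancel₀ hpos.ne'])
    rwa [hf, abs_of_pos (inv_pos.2 hpos), inv_mul_le_iff₀ hpos, mul_comm] at hunit

lemma exists_l2norm_mulVec_le (A : Matrix α β ℝ) :
    ∃ C, ∀ v, l2norm v = 1 → l2norm (A *ᵥ v) ≤ C := by
  classical
  refine ⟨‖(Matrix.toEuclideanLin A).toContinuousLinearMap‖, fun v hv => ?_⟩
  have hle := (Matrix.toEuclideanLin A).toContinuousLinearMap.le_opNorm (WithLp.toLp 2 v)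
  rw [l2norm_eq_norm_toLp] at hv
  rw [l2norm_eq_norm_toLp]
  rwa [hv, mul_one] at hle

lemma opNorm_nonneg (A : Matrix α β ℝ) : 0 ≤ opNorm A := by
  refine Real.sSup_nonneg ?_
  rintro _ ⟨v, -, rfl⟩
  exact l2norm_nonneg _

lemma l2norm_mulVec_le (A : Matrix α β ℝ) (v : β → ℝ) :
    l2norm (A *ᵥ v) ≤ opNorm A * l2norm v := by
  obtain ⟨C, hC⟩ := exists_l2norm_mulVec_le A
  have hbdd : BddAbove {c | ∃ w, l2norm w = 1 ∧ c = l2norm (A *ᵥ w)} := by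
    refine ⟨C, ?_⟩
    rintro _ ⟨w, hw, rfl⟩
    exact hC w hw
  exact le_mul_l2norm_of_forall_unit (f := fun v => l2norm (A *ᵥ v))
    (fun c v => by rw [mulVec_smul, l2norm_smul]) (fun v hv => le_csSup hbdd ⟨v, hv, rfl⟩) v

lemma abs_mulVec_apply_le (A : Matrix α β ℝ) (v : β → ℝ) (i : α) :
    |(A *ᵥ v) i| ≤ l2linfNorm A * l2norm v := by
  obtain ⟨C, hC⟩ := exists_l2norm_mulVec_le A
  have hsup (w : β → ℝ) : l2norm (A *ᵥ w) ∈ upperBounds {d | ∃ i, d = |(A *ᵥ w) i|} := by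
    rintro _ ⟨j, rfl⟩
    exact abs_apply_le_l2norm _ j
  have hbdd : BddAbove {c | ∃ w, l2norm w = 1 ∧ c = sSup {d | ∃ i, d = |(A *ᵥ w) i|}} := by
    refine ⟨C, ?_⟩
    rintro _ ⟨w, hw, rfl⟩
    refine (csSup_le ?_ (hsup w)).trans (hC w hw)
    exact ⟨_, i, rfl⟩
  have hunit (w : β → ℝ) (hw : l2norm w = 1) : |(A *ᵥ w) i| ≤ l2linfNorm A :=
    calc |(A *ᵥ w) i| ≤ sSup {d | ∃ i, d = |(A *ᵥ w) i|} :=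
          le_csSup ⟨l2norm (A *ᵥ w), hsup w⟩ ⟨i, rfl⟩
      _ ≤ l2linfNorm A := le_csSup hbdd ⟨w, hw, rfl⟩
  exact le_mul_l2norm_of_forall_unit (f := fun v => |(A *ᵥ v) i|)
    (fun c v => by rw [mulVec_smul, Pi.smul_apply, smul_eq_mul, abs_mul]) hunit v

end Euclidean

section NearIsometry

variable {K J : Type*} [Fintype K] [Fintype J]

lemma l2sq_mulVec_eq_dotProduct (U : Matrix K J ℝ) (y : J → ℝ) :
    l2sq (U *ᵥ y) = y ⬝ᵥ Uᵀ *ᵥ (U *ᵥ y) := by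
  rw [dotProduct_transpose_mulVec, dotProduct_self_eq_l2sq]

variable [DecidableEq J]

/-- The deviation `Δ = UᵀU - Id` of the Gram matrix of the columns of `U` from the identity. -/
def gramDefect (U : Matrix K J ℝ) : Matrix J J ℝ :=
  Uᵀ * U - 1

lemma transpose_mulVec_mulVec_eq_add (U : Matrix K J ℝ) (y : J → ℝ) :
    Uᵀ *ᵥ (U *ᵥ y) = y + gramDefect U *ᵥ y := by
  rw [gramDefect, sub_mulVec, one_mulVec, mulVec_mulVec, add_sub_cancel]

lemma abs_l2sq_mulVec_sub_le (U : Matrix K J ℝ) (y : J → ℝ) :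
    |l2sq (U *ᵥ y) - l2sq y| ≤ opNorm (gramDefect U) * l2sq y := by
  rw [l2sq_mulVec_eq_dotProduct, transpose_mulVec_mulVec_eq_add, dotProduct_add,
    dotProduct_self_eq_l2sq, add_sub_cancel_left]
  calc |y ⬝ᵥ gramDefect U *ᵥ y|
      ≤ l2norm y * l2norm (gramDefect U *ᵥ y) := abs_dotProduct_le _ _
    _ ≤ l2norm y * (opNorm (gramDefect U) * l2norm y) :=
      mul_le_mul_of_nonneg_left (l2norm_mulVec_le _ y) (l2norm_nonneg y)
    _ = opNorm (gramDefect U) * l2sq y := by rw [← l2norm_sq]; ring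

lemma l2sq_mulVec_le (U : Matrix K J ℝ) (y : J → ℝ) :
    l2sq (U *ᵥ y) ≤ (1 + opNorm (gramDefect U)) * l2sq y := by
  linarith [le_abs_self (l2sq (U *ᵥ y) - l2sq y), abs_l2sq_mulVec_sub_le U y]

lemma le_l2sq_mulVec (U : Matrix K J ℝ) (y : J → ℝ) :
    (1 - opNorm (gramDefect U)) * l2sq y ≤ l2sq (U *ᵥ y) := by
  linarith [neg_abs_le (l2sq (U *ᵥ y) - l2sq y), abs_l2sq_mulVec_sub_le U y]

lemma l2sq_transpose_mulVec_le (U : Matrix K J ℝ) (x : K → ℝ) :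
    l2sq (Uᵀ *ᵥ x) ≤ (1 + opNorm (gramDefect U)) * l2sq x := by
  have hnonneg : 0 ≤ 1 + opNorm (gramDefect U) := add_nonneg zero_le_one (opNorm_nonneg _)
  rcases (l2sq_nonneg (Uᵀ *ᵥ x)).eq_or_lt' with hzero | hpos
  · rw [hzero]
    exact mul_nonneg hnonneg (l2sq_nonneg x)
  refine le_of_mul_le_mul_right ?_ hpos
  calc l2sq (Uᵀ *ᵥ x) * l2sq (Uᵀ *ᵥ x) = (x ⬝ᵥ U *ᵥ (Uᵀ *ᵥ x)) ^ 2 := by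
        rw [l2sq_mulVec_eq_dotProduct, transpose_transpose, sq]
    _ ≤ l2sq x * l2sq (U *ᵥ (Uᵀ *ᵥ x)) := dotProduct_sq_le _ _
    _ ≤ l2sq x * ((1 + opNorm (gramDefect U)) * l2sq (Uᵀ *ᵥ x)) :=
      mul_le_mul_of_nonneg_left (l2sq_mulVec_le U _) (l2sq_nonneg x)
    _ = (1 + opNorm (gramDefect U)) * l2sq x * l2sq (Uᵀ *ᵥ x) := by ring

lemma le_l2sq_transpose_mulVec_mulVec (U : Matrix K J ℝ) (y : J → ℝ) :
    (1 - opNorm (gramDefect U)) * l2sq (U *ᵥ y) ≤ l2sq (Uᵀ *ᵥ (U *ᵥ y)) := by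
  rcases le_or_gt (1 - opNorm (gramDefect U)) 0 with hle | hlt
  · exact (mul_nonpos_of_nonpos_of_nonneg hle (l2sq_nonneg _)).trans (l2sq_nonneg _)
  rcases (l2sq_nonneg (U *ᵥ y)).eq_or_lt' with hzero | hpos
  · rw [hzero, mul_zero]
    exact l2sq_nonneg _
  refine le_of_mul_le_mul_right ?_ hpos
  calc (1 - opNorm (gramDefect U)) * l2sq (U *ᵥ y) * l2sq (U *ᵥ y)
      = (1 - opNorm (gramDefect U)) * (y ⬝ᵥ Uᵀ *ᵥ (U *ᵥ y)) ^ 2 := by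
        rw [← l2sq_mulVec_eq_dotProduct]; ring
    _ ≤ (1 - opNorm (gramDefect U)) * (l2sq y * l2sq (Uᵀ *ᵥ (U *ᵥ y))) :=
      mul_le_mul_of_nonneg_left (dotProduct_sq_le _ _) hlt.le
    _ = ((1 - opNorm (gramDefect U)) * l2sq y) * l2sq (Uᵀ *ᵥ (U *ᵥ y)) := by ring
    _ ≤ l2sq (U *ᵥ y) * l2sq (Uᵀ *ᵥ (U *ᵥ y)) :=
      mul_le_mul_of_nonneg_right (le_l2sq_mulVec U y) (l2sq_nonneg _)
    _ = l2sq (Uᵀ *ᵥ (U *ᵥ y)) * l2sq (U *ᵥ y) := mul_comm _ _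

end NearIsometry

section ColNormalize

variable {K J : Type*} [Fintype K]

/-- The matrix whose columns are the columns of `W` scaled to Euclidean norm one; a zero column
stays zero. -/
def colNormalize (W : Matrix K J ℝ) : Matrix K J ℝ :=
  of fun r j => W r j / l2norm (W.col j)

lemma l2norm_smul_col_colNormalize (W : Matrix K J ℝ) (j : J) :
    l2norm (W.col j) • (colNormalize W).col j = W.col j := by
  rcases eq_or_ne (W.col j) 0 with hzero | hne
  · rw [hzero, l2norm_eq_zero.2 rfl, zero_smul]
  · ext r
    exact mul_div_cancel₀ _ (l2norm_pos hne).ne'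

lemma l2norm_col_colNormalize_le_one (W : Matrix K J ℝ) (j : J) :
    l2norm ((colNormalize W).col j) ≤ 1 := by
  have hcol : (colNormalize W).col j = (l2norm (W.col j))⁻¹ • W.col j := by
    ext r
    exact div_eq_inv_mul _ _
  rw [hcol]
  exact l2norm_normalize_le_one _

lemma transpose_mulVec_eq_l2norm_col_mul (W : Matrix K J ℝ) (x : K → ℝ) (j : J) :
    (Wᵀ *ᵥ x) j = l2norm (W.col j) * ((colNormalize W)ᵀ *ᵥ x) j :=
  calc (Wᵀ *ᵥ x) j = (l2norm (W.col j) • (colNormalize W).col j) ⬝ᵥ x := by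
        rw [l2norm_smul_col_colNormalize]; rfl
    _ = l2norm (W.col j) * ((colNormalize W)ᵀ *ᵥ x) j := smul_dotProduct _ _ _

lemma mulVec_eq_colNormalize_mulVec [Fintype J] (W : Matrix K J ℝ) (y : J → ℝ) :
    W *ᵥ y = colNormalize W *ᵥ fun j => l2norm (W.col j) * y j := by
  have hentry (r : K) (j : J) : l2norm (W.col j) * colNormalize W r j = W r j :=
    congrFun (l2norm_smul_col_colNormalize W j) r
  ext r
  simp only [mulVec, dotProduct, ← hentry, mul_left_comm, mul_assoc]

end ColNormalize

lemma lt_sq_mul_of_mul_le {lam h g p : ℝ} (hlam : 0 < lam) (hlt : lam < h) (hh : h ≤ 1)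
    (hg : g ≤ 1 + lam / 6) (hp : 0 < p) (hp1 : p ≤ 1)
    (hgp : g * p ≤ h * (h * p - lam) + lam ^ 2 * (g / 2)) : g < h ^ 2 * (1 - lam / 6) := by
  have hlam1 : lam < 1 := hlt.trans_le hh
  have hgap : 0 < lam * h - lam ^ 2 * (g / 2) := by
    nlinarith [mul_lt_mul_of_pos_left hlt hlam, pow_pos hlam 2]
  have hmul : lam * h - lam ^ 2 * (g / 2) ≤ (h ^ 2 - g) * p := by linarith
  have hdiff : 0 < h ^ 2 - g := pos_of_mul_pos_left (hgap.trans_le hmul) hp.le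
  have hcancel : lam * h - lam ^ 2 * (g / 2) ≤ h ^ 2 - g :=
    hmul.trans (mul_le_of_le_one_right hdiff.le hp1)
  have hfactor : 0 < 1 - lam ^ 2 / 2 := by
    linarith [pow_le_one₀ hlam.le hlam1.le (n := 2)]
  refine lt_of_mul_lt_mul_right ?_ hfactor.le
  calc g * (1 - lam ^ 2 / 2) ≤ h ^ 2 - lam * h := by linarith
    _ ≤ h ^ 2 * (1 - lam) := by
      linarith [mul_le_mul_of_nonneg_left hh (mul_pos hlam (hlam.trans hlt)).le]
    _ < h ^ 2 * ((1 - lam / 6) * (1 - lam ^ 2 / 2)) := by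
      refine mul_lt_mul_of_pos_left ?_ (pow_pos (hlam.trans hlt) 2)
      nlinarith [pow_pos hlam 3]
    _ = h ^ 2 * (1 - lam / 6) * (1 - lam ^ 2 / 2) := by ring

/-- `a` is a constrained stationary point, with multiplier `γ`, of `a ↦ -½ ∑ⱼ (⟨wⱼ, a⟩ - λ)²` on
the unit sphere, where the atoms `wⱼ` are the columns of `W` and have norm at most one, and every
atom is active at `a`, that is `λ < ⟨wⱼ, a⟩`. -/
structure IsActiveStationary {K J : Type*} [Fintype K] [Fintype J] (W : Matrix K J ℝ)
    (lam γ : ℝ) (a : K → ℝ) : Prop where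
  lam_pos : 0 < lam
  l2norm_col_le_one : ∀ j, l2norm (W.col j) ≤ 1
  l2norm_eq_one : l2norm a = 1
  lam_lt : ∀ j, lam < (Wᵀ *ᵥ a) j
  stationary : W *ᵥ (Wᵀ *ᵥ a - fun _ => lam) = γ • a

namespace IsActiveStationary

variable {K J : Type*} [Fintype K] [Fintype J] {W : Matrix K J ℝ} {lam γ : ℝ} {a : K → ℝ}

lemma of_neg_gram {c : ℝ} (hlam : 0 < lam) (hcol : ∀ j, l2norm (W.col j) ≤ 1)
    (ha : l2norm a = 1) (hactive : ∀ j, lam < (Wᵀ *ᵥ a) j)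
    (hstat : -(W * Wᵀ) *ᵥ a + lam • W *ᵥ 1 = c • a) : IsActiveStationary W lam (-c) a where
  lam_pos := hlam
  l2norm_col_le_one := hcol
  l2norm_eq_one := ha
  lam_lt := hactive
  stationary := by
    have hconst : (fun _ : J => lam) = lam • 1 := funext fun _ => (mul_one lam).symm
    rw [neg_smul, ← hstat, hconst, mulVec_sub, mulVec_smul, mulVec_mulVec, neg_mulVec,
      neg_add, neg_neg, sub_eq_add_neg]

lemma l2sq_eq_one (h : IsActiveStationary W lam γ a) : l2sq a = 1 := by
  rw [← l2norm_sq, h.l2norm_eq_one, one_pow]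

lemma multiplier_eq_dotProduct (h : IsActiveStationary W lam γ a) :
    γ = (Wᵀ *ᵥ a - fun _ => lam) ⬝ᵥ Wᵀ *ᵥ a := by
  rw [dotProduct_transpose_mulVec, h.stationary, dotProduct_smul, dotProduct_self_eq_l2sq,
    h.l2sq_eq_one, smul_eq_mul, mul_one]

lemma multiplier_pos [Nonempty J] (h : IsActiveStationary W lam γ a) : 0 < γ := by
  rw [h.multiplier_eq_dotProduct]
  exact Finset.sum_pos
    (fun j _ => mul_pos (sub_pos.2 (h.lam_lt j)) (h.lam_pos.trans (h.lam_lt j)))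
    Finset.univ_nonempty

lemma normalized_corr_pos (h : IsActiveStationary W lam γ a) (j : J) :
    0 < ((colNormalize W)ᵀ *ᵥ a) j := by
  have hcorr := h.lam_pos.trans (h.lam_lt j)
  rw [transpose_mulVec_eq_l2norm_col_mul] at hcorr
  exact pos_of_mul_pos_right hcorr (l2norm_nonneg _)

lemma normalized_corr_le_one (h : IsActiveStationary W lam γ a) (j : J) :
    ((colNormalize W)ᵀ *ᵥ a) j ≤ 1 :=
  calc ((colNormalize W)ᵀ *ᵥ a) j
      ≤ l2norm ((colNormalize W).col j) * l2norm a :=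
        (le_abs_self _).trans (abs_dotProduct_le _ _)
    _ ≤ 1 := by
      rw [h.l2norm_eq_one, mul_one]
      exact l2norm_col_colNormalize_le_one W j

lemma lam_lt_l2norm_col (h : IsActiveStationary W lam γ a) (j : J) : lam < l2norm (W.col j) :=
  calc lam < l2norm (W.col j) * ((colNormalize W)ᵀ *ᵥ a) j :=
        transpose_mulVec_eq_l2norm_col_mul W a j ▸ h.lam_lt j
    _ ≤ l2norm (W.col j) :=
        mul_le_of_le_one_right (l2norm_nonneg _) (h.normalized_corr_le_one j)

lemma lam_lt_one (h : IsActiveStationary W lam γ a) (j : J) : lam < 1 :=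
  (h.lam_lt_l2norm_col j).trans_le (h.l2norm_col_le_one j)

lemma multiplier_le_l2sq_normalized_corr (h : IsActiveStationary W lam γ a) :
    γ ≤ l2sq ((colNormalize W)ᵀ *ᵥ a) := by
  rw [h.multiplier_eq_dotProduct]
  refine Finset.sum_le_sum fun j _ => ?_
  have hpos := h.lam_pos.trans (h.lam_lt j)
  have hle : (Wᵀ *ᵥ a) j ≤ ((colNormalize W)ᵀ *ᵥ a) j := by
    rw [transpose_mulVec_eq_l2norm_col_mul]
    exact mul_le_of_le_one_left (h.normalized_corr_pos j).le (h.l2norm_col_le_one j)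
  calc ((Wᵀ *ᵥ a) j - lam) * (Wᵀ *ᵥ a) j ≤ (Wᵀ *ᵥ a) j * (Wᵀ *ᵥ a) j := by
        gcongr; linarith [h.lam_pos]
    _ ≤ ((colNormalize W)ᵀ *ᵥ a) j ^ 2 := by rw [← sq]; gcongr

/-- The coefficients of `γ • a` in the normalized atoms. -/
def coeff (W : Matrix K J ℝ) (lam : ℝ) (a : K → ℝ) (j : J) : ℝ :=
  l2norm (W.col j) * ((Wᵀ *ᵥ a) j - lam)

lemma colNormalize_mulVec_coeff (h : IsActiveStationary W lam γ a) :
    colNormalize W *ᵥ coeff W lam a = γ • a :=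
  (mulVec_eq_colNormalize_mulVec W _).symm.trans h.stationary

variable [DecidableEq J]

lemma multiplier_le (h : IsActiveStationary W lam γ a)
    (hop : opNorm (gramDefect (colNormalize W)) ≤ lam / 6) : γ ≤ 1 + lam / 6 :=
  calc γ ≤ l2sq ((colNormalize W)ᵀ *ᵥ a) := h.multiplier_le_l2sq_normalized_corr
    _ ≤ (1 + opNorm (gramDefect (colNormalize W))) * l2sq a := l2sq_transpose_mulVec_le _ a
    _ ≤ 1 + lam / 6 := by rw [h.l2sq_eq_one, mul_one]; gcongr

lemma mul_l2sq_coeff_le (h : IsActiveStationary W lam γ a)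
    (hop : opNorm (gramDefect (colNormalize W)) ≤ lam / 6) :
    (1 - lam / 6) * l2sq (coeff W lam a) ≤ γ ^ 2 :=
  calc (1 - lam / 6) * l2sq (coeff W lam a)
      ≤ (1 - opNorm (gramDefect (colNormalize W))) * l2sq (coeff W lam a) := by
        gcongr; exact l2sq_nonneg _
    _ ≤ l2sq (colNormalize W *ᵥ coeff W lam a) := le_l2sq_mulVec _ _
    _ = γ ^ 2 := by rw [h.colNormalize_mulVec_coeff, l2sq_smul, h.l2sq_eq_one, mul_one]

lemma multiplier_mul_normalized_corr_le (h : IsActiveStationary W lam γ a)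
    (hinf : l2linfNorm (gramDefect (colNormalize W)) ≤ lam ^ 2 / √6)
    (hop : opNorm (gramDefect (colNormalize W)) ≤ lam / 6) (j : J) :
    γ * ((colNormalize W)ᵀ *ᵥ a) j ≤ coeff W lam a j + lam ^ 2 * (γ / 2) := by
  have : Nonempty J := ⟨j⟩
  have hlam := h.lam_lt_one j
  have hcoeff : l2norm (coeff W lam a) / √6 ≤ γ / 2 := by
    refine le_of_sq_le_sq ?_ (half_pos h.multiplier_pos).le
    rw [div_pow, Real.sq_sqrt (by norm_num), l2norm_sq]
    nlinarith [h.mul_l2sq_coeff_le hop, l2sq_nonneg (coeff W lam a)]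
  have hdefect : (gramDefect (colNormalize W) *ᵥ coeff W lam a) j ≤ lam ^ 2 * (γ / 2) :=
    calc (gramDefect (colNormalize W) *ᵥ coeff W lam a) j
        ≤ lam ^ 2 / √6 * l2norm (coeff W lam a) := (le_abs_self _).trans
          ((abs_mulVec_apply_le _ _ j).trans (by gcongr; exact l2norm_nonneg _))
      _ = lam ^ 2 * (l2norm (coeff W lam a) / √6) := by ring
      _ ≤ lam ^ 2 * (γ / 2) := by gcongr
  have hexpand : γ * ((colNormalize W)ᵀ *ᵥ a) j
      = coeff W lam a j + (gramDefect (colNormalize W) *ᵥ coeff W lam a) j := by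
    rw [← Pi.add_apply, ← transpose_mulVec_mulVec_eq_add, h.colNormalize_mulVec_coeff,
      mulVec_smul, Pi.smul_apply, smul_eq_mul]
  rw [hexpand]
  gcongr

lemma multiplier_lt_l2norm_col_sq_mul (h : IsActiveStationary W lam γ a)
    (hinf : l2linfNorm (gramDefect (colNormalize W)) ≤ lam ^ 2 / √6)
    (hop : opNorm (gramDefect (colNormalize W)) ≤ lam / 6) (j : J) :
    γ < l2norm (W.col j) ^ 2 * (1 - lam / 6) := by
  have hcoord := h.multiplier_mul_normalized_corr_le hinf hop j
  rw [coeff, transpose_mulVec_eq_l2norm_col_mul W] at hcoord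
  exact lt_sq_mul_of_mul_le h.lam_pos (h.lam_lt_l2norm_col j) (h.l2norm_col_le_one j)
    (h.multiplier_le hop) (h.normalized_corr_pos j) (h.normalized_corr_le_one j) hcoord

lemma multiplier_mul_l2sq_normalized_lt (h : IsActiveStationary W lam γ a)
    (hinf : l2linfNorm (gramDefect (colNormalize W)) ≤ lam ^ 2 / √6)
    (hop : opNorm (gramDefect (colNormalize W)) ≤ lam / 6) {x : K → ℝ}
    (hx : (colNormalize W)ᵀ *ᵥ x ≠ 0) :
    γ * l2sq ((colNormalize W)ᵀ *ᵥ x) < (1 - lam / 6) * l2sq (Wᵀ *ᵥ x) := by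
  obtain ⟨i, hi⟩ := Function.ne_iff.1 hx
  have hkey := h.multiplier_lt_l2norm_col_sq_mul hinf hop
  have hterm (j : J) : (1 - lam / 6) * (Wᵀ *ᵥ x) j ^ 2
      = l2norm (W.col j) ^ 2 * (1 - lam / 6) * ((colNormalize W)ᵀ *ᵥ x) j ^ 2 := by
    rw [transpose_mulVec_eq_l2norm_col_mul]
    ring
  simp only [l2sq, Finset.mul_sum, hterm]
  exact Finset.sum_lt_sum (fun j _ => mul_le_mul_of_nonneg_right (hkey j).le (sq_nonneg _))
    ⟨i, Finset.mem_univ i, mul_lt_mul_of_pos_right (hkey i) (sq_pos_of_ne_zero hi)⟩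

theorem multiplier_mul_l2sq_lt (h : IsActiveStationary W lam γ a)
    (hinf : l2linfNorm (gramDefect (colNormalize W)) ≤ lam ^ 2 / √6)
    (hop : opNorm (gramDefect (colNormalize W)) ≤ lam / 6) {ξ : K → ℝ}
    (hξ : ξ ∈ Set.range W.mulVec) (hξ0 : ξ ≠ 0) : γ * l2sq ξ < l2sq (Wᵀ *ᵥ ξ) := by
  obtain ⟨y, rfl⟩ := hξ
  have : Nonempty J := not_isEmpty_iff.1 fun _ => hξ0 (funext fun _ => Finset.sum_of_isEmpty _)
  have hfactor : 0 < 1 - lam / 6 := by linarith [h.lam_lt_one (Classical.arbitrary J)]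
  have hlower : (1 - lam / 6) * l2sq (W *ᵥ y) ≤ l2sq ((colNormalize W)ᵀ *ᵥ (W *ᵥ y)) :=
    calc (1 - lam / 6) * l2sq (W *ᵥ y)
        ≤ (1 - opNorm (gramDefect (colNormalize W))) * l2sq (W *ᵥ y) := by
          gcongr; exact l2sq_nonneg _
      _ ≤ l2sq ((colNormalize W)ᵀ *ᵥ (W *ᵥ y)) := by
          rw [mulVec_eq_colNormalize_mulVec]
          exact le_l2sq_transpose_mulVec_mulVec _ _
  have hcorr : (colNormalize W)ᵀ *ᵥ (W *ᵥ y) ≠ 0 := by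
    intro hzero
    rw [hzero, l2sq_zero] at hlower
    exact hlower.not_gt (mul_pos hfactor (l2sq_pos hξ0))
  refine lt_of_mul_lt_mul_left ?_ hfactor.le
  calc (1 - lam / 6) * (γ * l2sq (W *ᵥ y)) = γ * ((1 - lam / 6) * l2sq (W *ᵥ y)) :=
        mul_left_comm _ _ _
    _ ≤ γ * l2sq ((colNormalize W)ᵀ *ᵥ (W *ᵥ y)) :=
        mul_le_mul_of_nonneg_left hlower h.multiplier_pos.le
    _ < (1 - lam / 6) * l2sq (Wᵀ *ᵥ (W *ᵥ y)) :=
        h.multiplier_mul_l2sq_normalized_lt hinf hop hcorr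

theorem dotProduct_neg_gram_add_smul_mulVec_neg (h : IsActiveStationary W lam γ a)
    [DecidableEq K] (hinf : l2linfNorm (gramDefect (colNormalize W)) ≤ lam ^ 2 / √6)
    (hop : opNorm (gramDefect (colNormalize W)) ≤ lam / 6) {ξ : K → ℝ}
    (hξ : ξ ∈ Set.range (-(W * Wᵀ)).mulVec) (hξ0 : ξ ≠ 0) :
    ξ ⬝ᵥ (-(W * Wᵀ) + γ • (1 : Matrix K K ℝ)) *ᵥ ξ < 0 := by
  have hrange : ξ ∈ Set.range W.mulVec := by
    obtain ⟨x, rfl⟩ := hξ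
    exact ⟨-(Wᵀ *ᵥ x), by rw [mulVec_neg, mulVec_mulVec, neg_mulVec]⟩
  have hform : ξ ⬝ᵥ (-(W * Wᵀ) + γ • (1 : Matrix K K ℝ)) *ᵥ ξ = γ * l2sq ξ - l2sq (Wᵀ *ᵥ ξ) := by
    rw [add_mulVec, smul_mulVec, one_mulVec, neg_mulVec, ← mulVec_mulVec, dotProduct_add,
      dotProduct_neg, dotProduct_smul, l2sq_mulVec_eq_dotProduct, transpose_transpose,
      dotProduct_self_eq_l2sq, smul_eq_mul, neg_add_eq_sub]
  rw [hform]
  exact sub_neg.2 (h.multiplier_mul_l2sq_lt hinf hop hrange hξ0)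

end IsActiveStationary

section Projection

variable {K : Type*} [Fintype K] [DecidableEq K]

lemma one_sub_vecMulVec_self_mulVec_of_dotProduct_eq_zero {u ξ : K → ℝ} (h : ξ ⬝ᵥ u = 0) :
    (1 - vecMulVec u u) *ᵥ ξ = ξ := by
  rw [sub_mulVec, one_mulVec, vecMulVec_mulVec, dotProduct_comm, h, MulOpposite.op_zero, zero_smul,
    sub_zero]

lemma dotProduct_proj_mul_mul_proj_mulVec_of_dotProduct_eq_zero (A : Matrix K K ℝ) {u ξ : K → ℝ}
    (h : ξ ⬝ᵥ u = 0) :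
    ξ ⬝ᵥ ((1 - vecMulVec u u) * A * (1 - vecMulVec u u)) *ᵥ ξ = ξ ⬝ᵥ A *ᵥ ξ := by
  have hfix := one_sub_vecMulVec_self_mulVec_of_dotProduct_eq_zero h
  have hsymm : (1 - vecMulVec u u)ᵀ = 1 - vecMulVec u u := by
    rw [transpose_sub, transpose_one, transpose_vecMulVec]
  rw [← mulVec_mulVec, ← mulVec_mulVec, hfix, ← hsymm, dotProduct_transpose_mulVec, hfix,
    dotProduct_comm]

end Projection

section Soft

lemma sign_soft_mul_eq_abs {lam t : ℝ} (h : soft lam t ≠ 0) : Real.sign (soft lam t) * t = |t| := by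
  have hmax : 0 < max (|t| - lam) 0 := (le_max_right _ _).lt_of_ne' (right_ne_zero_of_mul h)
  rcases lt_trichotomy t 0 with hneg | rfl | hpos
  · have hsoft : soft lam t < 0 := by
      rw [soft, Real.sign_of_neg hneg]
      linarith
    rw [Real.sign_of_neg hsoft, abs_of_neg hneg, neg_one_mul]
  · rw [mul_zero, abs_zero]
  · have hsoft : 0 < soft lam t := by rwa [soft, Real.sign_of_pos hpos, one_mul]
    rw [Real.sign_of_pos hsoft, abs_of_pos hpos, one_mul]

lemma lt_abs_of_soft_ne_zero {lam t : ℝ} (h : soft lam t ≠ 0) : lam < |t| := by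
  contrapose! h
  rw [soft, max_eq_right (sub_nonpos.2 h), mul_zero]

lemma lt_sign_soft_mul {lam t : ℝ} (h : soft lam t ≠ 0) : lam < Real.sign (soft lam t) * t :=
  (lt_abs_of_soft_ne_zero h).trans_eq (sign_soft_mul_eq_abs h).symm

lemma abs_sign_of_ne_zero {t : ℝ} (h : t ≠ 0) : |Real.sign t| = 1 := by
  rcases Real.sign_apply_eq_of_ne_zero t h with hs | hs <;> rw [hs]
  · rw [abs_neg, abs_one]
  · exact abs_one

end Soft

section Shift

variable {k m : ℕ}

lemma dotProduct_pad (h : k ≤ m) (v : Fin m → ℝ) (a : Fin k → ℝ) :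
    v ⬝ᵥ pad k m a = unpad h v ⬝ᵥ a := by
  refine (Fintype.sum_of_injective _ (Fin.castLE_injective h) _ _ (fun i hi => ?_) fun r => ?_).symm
  · have hki : ¬ (i : ℕ) < k := fun hik => hi ⟨⟨i, hik⟩, rfl⟩
    rw [pad, dif_neg hki, mul_zero]
  · simp only [unpad, pad, Fin.val_castLE, r.isLt, dite_true, Fin.eta]

lemma unpad_pad (h : k ≤ m) (a : Fin k → ℝ) : unpad h (pad k m a) = a := by
  ext r
  simp only [unpad, pad, Fin.val_castLE, r.isLt, dite_true, Fin.eta]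

lemma l2sq_pad (h : k ≤ m) (a : Fin k → ℝ) : l2sq (pad k m a) = l2sq a := by
  rw [← dotProduct_self_eq_l2sq, dotProduct_pad h, unpad_pad, dotProduct_self_eq_l2sq]

lemma l2sq_unpad_le (h : k ≤ m) (v : Fin m → ℝ) : l2sq (unpad h v) ≤ l2sq v := by
  calc l2sq (unpad h v) = ∑ i ∈ Finset.univ.map (Fin.castLEEmb h), v i ^ 2 :=
        (Finset.sum_map Finset.univ (Fin.castLEEmb h) fun i => v i ^ 2).symm
    _ ≤ l2sq v := Finset.sum_le_univ_sum_of_nonneg fun i => sq_nonneg (v i)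

lemma transpose_padM_mul (h : k ≤ m) {β : Type*} (B : Matrix (Fin m) β ℝ) :
    (padM k m)ᵀ * B = B.submatrix (Fin.castLE h) id := by
  have hpad : (padM k m)ᵀ =
      (1 : Matrix (Fin m) (Fin m) ℝ).submatrix (Fin.castLE h) (Equiv.refl _) := by
    ext r i
    simp [padM, one_apply, Fin.ext_iff, eq_comm]
  rw [hpad, one_submatrix_mul]
  rfl

variable [NeZero m]

lemma coe_idx (t : ℤ) : ((idx m t : ℕ) : ℤ) = t % m :=
  Int.toNat_of_nonneg (Int.emod_nonneg _ (by exact_mod_cast NeZero.ne m))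

lemma idx_sub_injective (t : ℤ) : Function.Injective fun i : Fin m => idx m ((i : ℤ) - t) := by
  intro i j hij
  have hmod : (i : ℤ) - t ≡ j - t [ZMOD m] := by
    rw [Int.ModEq, ← coe_idx, ← coe_idx]
    exact congrArg (fun i : Fin m => ((i : ℕ) : ℤ)) hij
  have hnat : (i : ℕ) ≡ j [MOD m] := Int.natCast_modEq_iff.1 (by simpa using hmod.add_right t)
  exact Fin.ext (hnat.eq_of_lt_of_lt i.isLt j.isLt)

lemma l2sq_cshift (τ : ℤ) (v : Fin m → ℝ) : l2sq (cshift τ v) = l2sq v :=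
  (idx_sub_injective τ).bijective_of_finite.sum_comp fun i => v i ^ 2

lemma l2norm_shiftTrunc_le (h : k ≤ m) (a0 : Fin k → ℝ) (τ : Fin m) :
    l2norm (shiftTrunc h a0 τ) ≤ l2norm a0 := by
  refine Real.sqrt_le_sqrt ?_
  calc l2sq (shiftTrunc h a0 τ) ≤ l2sq (cshift (-(τ : ℤ)) (pad k m a0)) := l2sq_unpad_le h _
    _ = l2sq a0 := by rw [l2sq_cshift, l2sq_pad h]

/-- The `k × m` matrix `ι* Č_{a0}`, whose `i`-th column is the truncated shift `ι* s_{-i}[ι a0]`. -/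
def shiftAtoms (h : k ≤ m) (a0 : Fin k → ℝ) : Matrix (Fin k) (Fin m) ℝ :=
  of fun r i => shiftTrunc h a0 i r

lemma transpose_padM_mul_rcirc (h : k ≤ m) (a0 : Fin k → ℝ) :
    (padM k m)ᵀ * rcirc k m a0 = shiftAtoms h a0 :=
  transpose_padM_mul h _

lemma transpose_rcirc_mul_padM (h : k ≤ m) (a0 : Fin k → ℝ) :
    (rcirc k m a0)ᵀ * padM k m = (shiftAtoms h a0)ᵀ := by
  rw [← transpose_padM_mul_rcirc, transpose_mul, transpose_transpose]

lemma transpose_rcirc_mulVec_pad (h : k ≤ m) (a0 a : Fin k → ℝ) :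
    (rcirc k m a0)ᵀ *ᵥ pad k m a = (shiftAtoms h a0)ᵀ *ᵥ a :=
  funext fun _ => dotProduct_pad h _ a

end Shift

section SignedCols

/-- The columns of `B` with index in `I`, the `i`-th one multiplied by the sign `σ i`. -/
def signedCols {K ι : Type*} (B : Matrix K ι ℝ) (I : Set ι) (σ : ι → ℝ) : Matrix K I ℝ :=
  of fun r j => σ j * B r j

section Columns

variable {K ι : Type*} [Fintype K] (B : Matrix K ι ℝ) {I : Set ι} {σ : ι → ℝ}

lemma transpose_signedCols_mulVec (x : K → ℝ) (j : I) :
    ((signedCols B I σ)ᵀ *ᵥ x) j = σ j * (Bᵀ *ᵥ x) j :=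
  smul_dotProduct (σ j) (B.col j) x

lemma l2norm_col_signedCols (hσ : ∀ i ∈ I, |σ i| = 1) (j : I) :
    l2norm ((signedCols B I σ).col j) = l2norm (B.col j) :=
  (l2norm_smul (σ j) (B.col j)).trans (by rw [hσ j j.2, one_mul])

lemma colNormalize_signedCols (hσ : ∀ i ∈ I, |σ i| = 1) :
    colNormalize (signedCols B I σ) =
      of fun r (j : I) => σ j * B r j / l2norm (B.col j) := by
  ext r j
  rw [colNormalize, of_apply, l2norm_col_signedCols B hσ]
  rfl

end Columns

variable {K : Type*} {m : ℕ} (B : Matrix K (Fin m) ℝ) {I : Set (Fin m)} {σ : Fin m → ℝ}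

lemma mul_projM_apply (r : K) (i : Fin m) : (B * projM I) r i = if i ∈ I then B r i else 0 := by
  simp [mul_apply, projM, ite_and]

variable [Fintype I]

lemma mul_projM_mulVec_apply (f : Fin m → ℝ) (r : K) :
    ((B * projM I) *ᵥ f) r = ∑ j : I, B r j * f j := by
  simp only [mulVec, dotProduct, mul_projM_apply]
  refine (Fintype.sum_of_injective _ Subtype.val_injective _ _ (fun i hi => ?_) fun j => ?_).symm
  · rw [Subtype.range_coe] at hi
    rw [if_neg hi, zero_mul]
  · rw [if_pos j.2]

lemma mul_projM_mulVec : (B * projM I) *ᵥ σ = signedCols B I σ *ᵥ 1 := by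
  ext r
  rw [mul_projM_mulVec_apply]
  exact Finset.sum_congr rfl fun j _ => (mul_comm _ _).trans (mul_one _).symm

lemma mul_projM_mul_transpose (hσ : ∀ i ∈ I, |σ i| = 1) :
    B * projM I * Bᵀ = signedCols B I σ * (signedCols B I σ)ᵀ := by
  ext r s
  refine (mul_projM_mulVec_apply B (fun i => B s i) r).trans (Finset.sum_congr rfl fun j _ => ?_)
  have hsq : σ j * σ j = 1 := by rw [← abs_mul_abs_self, hσ j j.2, one_mul]
  calc B r j * B s j = σ j * σ j * (B r j * B s j) := by rw [hsq, one_mul]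
    _ = (σ j * B r j) * (σ j * B s j) := mul_mul_mul_comm _ _ _ _

end SignedCols

/-- at a stationary point `ā` with nonempty support whose shift-truncation
matrix `U` is nearly orthogonal, the multiplier `γ` is positive and the (projected)
quadratic form `M_σ + γ Id` is negative definite on `range(M_σ)`. -/
theorem stmt_13 {k m : ℕ} [NeZero m] (hkm : k ≤ m) (lam : ℝ) (h0 : 0 < lam)
    (h1 : lam < 1) (a0 abar : Fin k → ℝ) (ha0 : l2norm a0 = 1) (habar : l2norm abar = 1) :
    let v : Fin m → ℝ := softvec lam (((rcirc k m a0)ᵀ).mulVec (pad k m abar))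
    let I : Set (Fin m) := {i | v i ≠ 0}
    let σ : Fin m → ℝ := fun i => Real.sign (v i)
    let U : Matrix (Fin k) ↥I ℝ := Matrix.of fun (r : Fin k) (j : ↥I) =>
      σ (j : Fin m) * shiftTrunc hkm a0 (j : Fin m) r / l2norm (shiftTrunc hkm a0 (j : Fin m))
    let M : Matrix (Fin k) (Fin k) ℝ :=
      -((padM k m)ᵀ * rcirc k m a0 * projM I * (rcirc k m a0)ᵀ * padM k m)
    let b : Fin k → ℝ := lam • ((padM k m)ᵀ * rcirc k m a0 * projM I).mulVec σ
    let γ : ℝ := -(dotp abar (M.mulVec abar) + dotp b abar)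
    I.Nonempty →
    M.mulVec abar + b = (dotp abar (M.mulVec abar) + dotp b abar) • abar →
    l2linfNorm (Uᵀ * U - 1) ≤ lam ^ 2 / Real.sqrt 6 →
    opNorm (Uᵀ * U - 1) ≤ lam / 6 →
    0 < γ ∧
    (∀ ξ : Fin k → ℝ, ξ ∈ Set.range M.mulVec → ξ ≠ 0 →
      dotp ξ ((M + γ • (1 : Matrix (Fin k) (Fin k) ℝ)).mulVec ξ) < 0) ∧
    (∀ ξ : Fin k → ℝ, ξ ∈ Set.range M.mulVec → ξ ≠ 0 → dotp ξ abar = 0 →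
      dotp ξ
        (((1 - Matrix.vecMulVec abar abar) * (M + γ • (1 : Matrix (Fin k) (Fin k) ℝ)) *
          (1 - Matrix.vecMulVec abar abar)).mulVec ξ) < 0) := by
  intro v I σ U M b γ hI hstat hinf hop
  have := hI.to_subtype
  have hσ : ∀ i ∈ I, |σ i| = 1 := fun i => abs_sign_of_ne_zero
  set W := signedCols (shiftAtoms hkm a0) I σ
  have hU : U = colNormalize W := (colNormalize_signedCols (shiftAtoms hkm a0) hσ).symm
  have hM : M = -(W * Wᵀ) := by
    rw [← mul_projM_mul_transpose _ hσ, ← transpose_rcirc_mul_padM, ← transpose_padM_mul_rcirc,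
      ← Matrix.mul_assoc]
  have hb : b = lam • W *ᵥ 1 := by rw [← mul_projM_mulVec, ← transpose_padM_mul_rcirc hkm]
  have hW : IsActiveStationary W lam γ abar := by
    refine .of_neg_gram h0 (fun j => ?_) habar (fun j => ?_) (hM ▸ hb ▸ hstat)
    · rw [l2norm_col_signedCols _ hσ]
      exact (l2norm_shiftTrunc_le hkm a0 j).trans_eq ha0
    · rw [transpose_signedCols_mulVec, ← transpose_rcirc_mulVec_pad]
      exact lt_sign_soft_mul j.2
  have hneg {ξ : Fin k → ℝ} (hξ : ξ ∈ Set.range M.mulVec) (hξ0 : ξ ≠ 0) :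
      ξ ⬝ᵥ (M + γ • (1 : Matrix (Fin k) (Fin k) ℝ)) *ᵥ ξ < 0 := by
    rw [hU] at hinf hop
    rw [hM] at hξ ⊢
    exact hW.dotProduct_neg_gram_add_smul_mulVec_neg hinf hop hξ hξ0
  refine ⟨hW.multiplier_pos, fun ξ => hneg, fun ξ hξ hξ0 horth => ?_⟩
  exact (dotProduct_proj_mul_mul_proj_mulVec_of_dotProduct_eq_zero _ horth).trans_lt (hneg hξ hξ0)

end
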